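/- Let (X,d) be a finite metric space of p-negative type with p-distance matrix D_p. If D_p is of strict negative type, then D_p is invertible and ⟨D_p^{-1} 1, 1⟩ ≠ 0. -/

import Mathlib

open Matrix

/-!
Strict negativity of `⟨D α, α⟩` on the hyperplane `⟨α, 1⟩ = 0` forces any nonzero `α` in the kernel
of `D` to lie off that hyperplane. Every vector `v` then has a translate `v - c α` on the
hyperplane, and since `D` is symmetric with `D α = 0`, the quadratic form takes the same value at
`v` and at `v - c α`, so it is nonpositive everywhere. This fails at `v = e₀ + e₁`, where its value
is `2 d(x₀, x₁) ^ p > 0`. Hence `D` is invertible.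

For the second claim, `v = D⁻¹ 1` is nonzero and satisfies `⟨D v, v⟩ = ⟨v, 1⟩`; if this vanished,
`v` would contradict strictness.
-/

/-- If the `p`-distance matrix of a finite metric space of `p`-negative type is of
strict negative type, then it is invertible and `⟨D⁻¹ 1, 1⟩ ≠ 0`. -/
theorem strict_neg_type_inv_ones {n : ℕ} (hn : 2 ≤ n) {X : Type*} [MetricSpace X]
    (x : Fin n ≃ X) (p : ℝ) (hp : 0 ≤ p)
    (D : Matrix (Fin n) (Fin n) ℝ)
    (hD : ∀ i j, D i j = if i = j then 0 else dist (x i) (x j) ^ p)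
    (hneg : ∀ α : Fin n → ℝ, α ⬝ᵥ 1 = 0 → D.mulVec α ⬝ᵥ α ≤ 0)
    (hstrict : ∀ α : Fin n → ℝ, α ≠ 0 → α ⬝ᵥ 1 = 0 → D.mulVec α ⬝ᵥ α < 0) :
    IsUnit D ∧ D⁻¹.mulVec 1 ⬝ᵥ 1 ≠ 0 := by
  have hsymm : Dᵀ = D := by
    ext i j
    simp only [transpose_apply, hD, eq_comm (a := j), dist_comm (x j)]
  have hunit : IsUnit D := by
    rw [isUnit_iff_isUnit_det, isUnit_iff_ne_zero]
    intro hdet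
    obtain ⟨α, hα, hDα⟩ := exists_mulVec_eq_zero_iff.mpr hdet
    have hs : α ⬝ᵥ 1 ≠ 0 := fun h => by
      have := hstrict α hα h
      simp [hDα] at this
    let i : Fin n := ⟨0, by omega⟩
    let j : Fin n := ⟨1, by omega⟩
    have hij : i ≠ j := by simp [i, j]
    let v : Fin n → ℝ := Pi.single i 1 + Pi.single j 1
    have hv : 0 < D *ᵥ v ⬝ᵥ v := by
      have hd : 0 < dist (x i) (x j) ^ p :=
        Real.rpow_pos_of_pos (dist_pos.mpr (x.injective.ne hij)) p
      have : D *ᵥ v ⬝ᵥ v = 2 * dist (x i) (x j) ^ p := by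
        simp [v, mulVec_add, hD, hij, hij.symm, dist_comm (x j)]
        ring
      linarith
    have horth : D *ᵥ v ⬝ᵥ α = 0 := by
      rw [dotProduct_comm, dotProduct_mulVec, ← mulVec_transpose, hsymm, hDα, zero_dotProduct]
    have h := hneg (v - ((v ⬝ᵥ 1) / (α ⬝ᵥ 1)) • α) (by
      rw [sub_dotProduct, smul_dotProduct, smul_eq_mul, div_mul_cancel₀ _ hs, sub_self])
    rw [mulVec_sub, mulVec_smul, hDα, smul_zero, sub_zero, dotProduct_sub, dotProduct_smul,
      horth, smul_zero, sub_zero] at h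
    linarith
  refine ⟨hunit, fun h => ?_⟩
  have hDv : D *ᵥ (D⁻¹ *ᵥ 1) = 1 := by
    rw [mulVec_mulVec, mul_nonsing_inv _ ((isUnit_iff_isUnit_det D).mp hunit), one_mulVec]
  have hv0 : D⁻¹ *ᵥ (1 : Fin n → ℝ) ≠ 0 := fun h0 => by
    rw [h0, mulVec_zero] at hDv
    have := congrFun hDv ⟨0, by omega⟩
    simp at this
  have := hstrict _ hv0 h
  rw [hDv, dotProduct_comm, h] at this
  exact lt_irrefl _ this
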